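/- Let ε, α₀, β₀, γ ∈ ℂ* and set α(l) = ε^l·α₀, β(m) = ε^m·β₀. Suppose F, G, H : ℤ × ℤ → ℂ* satisfy H(l,m) = α(l)²/(F(l,m)·G(l,m)), the l-direction system F(l+1,m)/G(l,m) = β(m)²·(1+H(l,m)+H(l,m)·F(l,m))/(1+F(l,m)+F(l,m)·G(l,m)), G(l+1,m)/H(l,m) = (1+F(l,m)+F(l,m)·G(l,m))/(γ²·(1+G(l,m)+G(l,m)·H(l,m))), H(l+1,m)/F(l,m) = ε²·γ²·(1+G(l,m)+G(l,m)·H(l,m))/(β(m)²·(1+H(l,m)+H(l,m)·F(l,m))), and the m-direction system F(l,m+1)·F(l,m) = α(l)²·β(m)²·γ²·(1+H(l,m+1))/(H(l,m+1)·(γ²+β(m)²·H(l,m+1))), H(l,m+1)·H(l,m) = α(l)²·γ²·(β(m)²+F(l,m))/(β(m)²·F(l,m)·(1+F(l,m))), for all l,m. Then u(l,m) := ε^(1/2)·γ·G(l,m)/α(l), where ε^(1/2) is a fixed square root of ε, satisfies ε·u(l+1,m+1) − u(l,m) = ε/u(l,m+1) − 1/u(l+1,m) for all l,m. -/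

import Mathlib

theorem core (a b c f g h F G H G1 g1 : ℂ) (hb : b ≠ 0) (hc : c ≠ 0)
    (hf : f ≠ 0) (hg : g ≠ 0) (hh : h ≠ 0) (hF : F ≠ 0) (hG : G ≠ 0) (hH : H ≠ 0)
    (ha : h * (f * g) = a) (ha' : H * (F * G) = a)
    (d1 : 1 + f + f * g ≠ 0) (d2 : 1 + g + g * h ≠ 0) (d2' : 1 + G + G * H ≠ 0)
    (d4 : c + b * H ≠ 0) (d5 : 1 + f ≠ 0)
    (e1 : g1 / h = (1 + f + f * g) / (c * (1 + g + g * h)))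
    (e2 : G1 / H = (1 + F + F * G) / (c * (1 + G + G * H)))
    (m1 : F * f = a * b * c * (1 + H) / (H * (c + b * H)))
    (m2 : H * h = a * c * (b + f) / (b * f * (1 + f))) :
    c * (G1 - g) = a * (1 / G - 1 / g1) := by
  have ha0 : a ≠ 0 := by rw [← ha]; exact mul_ne_zero hh (mul_ne_zero hf hg)
  have hH1 : 1 + H ≠ 0 := by
    intro h0
    rw [h0] at m1
    simp [hF, hf] at m1
  have HE : H = c * g * (b + f) / (b * (1 + f)) := by
    apply mul_right_cancel₀ hh
    rw [m2, ← ha]; field_simp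
  have hbf : b + f ≠ 0 := by
    intro h0; apply hH; rw [HE, h0]; simp
  have GE : G * (b * c * (1 + H)) = f * (c + b * H) := by
    have h1 : F * f * (H * (c + b * H)) = a * b * c * (1 + H) := by
      rw [m1]; field_simp
    apply mul_left_cancel₀ (mul_ne_zero hF hH)
    linear_combination -h1 + (b * c * (1 + H)) * ha'
  have hD : b * (1 + f) + c * g * (b + f) ≠ 0 := by
    have : b * (1 + f) + c * g * (b + f) = b * (1 + f) * (1 + H) := by
      rw [HE]; field_simp
    rw [this]; exact mul_ne_zero (mul_ne_zero hb d5) hH1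
  have hN : 1 + f + g * b + g * f ≠ 0 := by
    have : c * (1 + f + g * b + g * f) = (1 + f) * (c + b * H) := by
      rw [HE]; field_simp; ring
    intro h0
    rw [h0, mul_zero] at this
    exact mul_ne_zero d5 d4 this.symm
  have GE2 : G = f * (1 + f + g * b + g * f) / (b * (1 + f) + c * g * (b + f)) := by
    rw [eq_div_iff hD]
    have h1 : b * c * (1 + H) * (1 + f) = c * (b * (1 + f) + c * g * (b + f)) := by
      rw [HE]; field_simp
    have h2 : (c + b * H) * (1 + f) = c * (1 + f + g * b + g * f) := by
      rw [HE]; field_simp; ring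
    apply mul_left_cancel₀ hc
    linear_combination (1 + f) * GE - G * h1 + f * h2
  have hQ : 1 + G + G * H = (b + f) * (1 + f + f * g) / (b * (1 + f)) := by
    rw [GE2, HE]
    obtain ⟨D, hDe⟩ : ∃ D, D = b * (1 + f) + c * g * (b + f) := ⟨_, rfl⟩
    rw [← hDe] at hD ⊢
    field_simp
    rw [hDe]
    ring
  have g1E : g1 = h * (1 + f + f * g) / (c * (1 + g + g * h)) := by
    rw [div_eq_iff hh] at e1; rw [e1]; ring
  have G1E : G1 = (H + a / G + a) / (c * (1 + G + G * H)) := by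
    rw [div_eq_iff hH] at e2; rw [e2, ← ha']; field_simp
  rw [G1E, hQ, g1E, HE, GE2, ← ha]
  obtain ⟨D, hDe⟩ : ∃ D, D = b * (1 + f) + c * g * (b + f) := ⟨_, rfl⟩
  obtain ⟨N, hNe⟩ : ∃ N, N = 1 + f + g * b + g * f := ⟨_, rfl⟩
  obtain ⟨E, hEe⟩ : ∃ E, E = 1 + f + f * g := ⟨_, rfl⟩
  obtain ⟨W, hWe⟩ : ∃ W, W = 1 + g + g * h := ⟨_, rfl⟩
  rw [← hDe] at hD ⊢
  rw [← hNe] at hN ⊢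
  rw [← hEe] at d1 ⊢
  rw [← hWe] at d2 ⊢
  field_simp
  rw [hDe, hNe, hEe, hWe]
  ring


theorem stmt_4 (ε α₀ β₀ γ : ℂ) (hε : ε ≠ 0) (hα₀ : α₀ ≠ 0) (hβ₀ : β₀ ≠ 0) (hγ : γ ≠ 0)
    (s : ℂ) (hs : s ^ 2 = ε)
    (α β : ℤ → ℂ) (hα : ∀ l : ℤ, α l = ε ^ l * α₀) (hβ : ∀ m : ℤ, β m = ε ^ m * β₀)
    (F G H : ℤ × ℤ → ℂ)
    (hF : ∀ l m : ℤ, F (l, m) ≠ 0) (hG : ∀ l m : ℤ, G (l, m) ≠ 0)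
    (hH : ∀ l m : ℤ, H (l, m) ≠ 0)
    (hFGH : ∀ l m : ℤ, H (l, m) = (α l) ^ 2 / (F (l, m) * G (l, m)))
    (hden1 : ∀ l m : ℤ, 1 + F (l, m) + F (l, m) * G (l, m) ≠ 0)
    (hden2 : ∀ l m : ℤ, 1 + G (l, m) + G (l, m) * H (l, m) ≠ 0)
    (hden3 : ∀ l m : ℤ, 1 + H (l, m) + H (l, m) * F (l, m) ≠ 0)
    (hden4 : ∀ l m : ℤ, γ ^ 2 + (β m) ^ 2 * H (l, m) ≠ 0)
    (hden5 : ∀ l m : ℤ, 1 + F (l, m) ≠ 0)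
    (hl1 : ∀ l m : ℤ,
      F (l + 1, m) / G (l, m)
        = (β m) ^ 2 * (1 + H (l, m) + H (l, m) * F (l, m))
          / (1 + F (l, m) + F (l, m) * G (l, m)))
    (hl2 : ∀ l m : ℤ,
      G (l + 1, m) / H (l, m)
        = (1 + F (l, m) + F (l, m) * G (l, m))
          / (γ ^ 2 * (1 + G (l, m) + G (l, m) * H (l, m))))
    (hl3 : ∀ l m : ℤ,
      H (l + 1, m) / F (l, m)
        = ε ^ 2 * γ ^ 2 * (1 + G (l, m) + G (l, m) * H (l, m))
          / ((β m) ^ 2 * (1 + H (l, m) + H (l, m) * F (l, m))))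
    (hm1 : ∀ l m : ℤ,
      F (l, m + 1) * F (l, m)
        = (α l) ^ 2 * (β m) ^ 2 * γ ^ 2 * (1 + H (l, m + 1))
          / (H (l, m + 1) * (γ ^ 2 + (β m) ^ 2 * H (l, m + 1))))
    (hm2 : ∀ l m : ℤ,
      H (l, m + 1) * H (l, m)
        = (α l) ^ 2 * γ ^ 2 * ((β m) ^ 2 + F (l, m))
          / ((β m) ^ 2 * F (l, m) * (1 + F (l, m))))
    (u : ℤ × ℤ → ℂ)
    (hu : ∀ l m : ℤ, u (l, m) = s * γ * G (l, m) / α l) :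
    ∀ l m : ℤ,
      ε * u (l + 1, m + 1) - u (l, m) = ε / u (l, m + 1) - 1 / u (l + 1, m) := by
  intro l m
  have hαn : ∀ l, α l ≠ 0 := fun l => by rw [hα]; exact mul_ne_zero (zpow_ne_zero _ hε) hα₀
  have hβn : ∀ l, β l ≠ 0 := fun l => by rw [hβ]; exact mul_ne_zero (zpow_ne_zero _ hε) hβ₀
  have hs0 : s ≠ 0 := by rintro rfl; apply hε; rw [← hs]; simp
  have hfg : ∀ l m, H (l, m) * (F (l, m) * G (l, m)) = α l ^ 2 := fun l m => by
    rw [hFGH]; exact div_mul_cancel₀ _ (mul_ne_zero (hF l m) (hG l m))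
  have d4 : γ ^ 2 + β m ^ 2 * H (l, m + 1) ≠ 0 := by
    intro h0
    have := hm1 l m
    rw [h0] at this
    simp [hF] at this
  have key := core (α l ^ 2) (β m ^ 2) (γ ^ 2) _ _ _ _ _ _ _ _ (pow_ne_zero 2 (hβn m))
    (pow_ne_zero 2 hγ) (hF l m) (hG l m) (hH l m) (hF l (m + 1)) (hG l (m + 1)) (hH l (m + 1))
    (hfg l m) (hfg l (m + 1)) (hden1 l m) (hden2 l m) (hden2 l (m + 1)) d4 (hden5 l m)
    (hl2 l m) (hl2 l (m + 1)) (hm1 l m) (hm2 l m)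
  have hαs : α (l + 1) = s ^ 2 * α l := by rw [hα, hα, zpow_add_one₀ hε, hs]; ring
  have hα0 := hαn l
  have hg1 := hG (l + 1) m
  have hg2 := hG l (m + 1)
  rw [hu, hu, hu, hu, hαs, ← hs]
  field_simp
  field_simp at key
  linear_combination key
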